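/- Let f and f′ be two smooth cubic forms in four variables over 𝔽₂ whose stabilizers in GL₄(𝔽₂) each have order 720 (equivalently, are each isomorphic to S₆). Then f and f′ are GL₄(𝔽₂)-equivalent: there exists g ∈ GL₄(𝔽₂) with f ∘ g = f′. In other words, the smooth cubic surface over 𝔽₂ with automorphism group of order 720 is unique up to isomorphism. -/

import Mathlib

open MvPolynomial

noncomputable section

/-- The field with two elements. -/
abbrev F2 : Type := ZMod 2

/-- An algebraic closure of `F2`. -/
abbrev Kbar : Type := AlgebraicClosure F2

/-- Linear substitution action of a matrix `g` on a polynomial `f`: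
`(act g f)(x) = f (g * x)`, i.e. the variable `X i` is replaced by `∑ j, g i j • X j`. -/
def act (g : Matrix (Fin 4) (Fin 4) F2) (f : MvPolynomial (Fin 4) F2) :
    MvPolynomial (Fin 4) F2 :=
  aeval (fun i => ∑ j, g i j • X j) f

lemma act_one (f : MvPolynomial (Fin 4) F2) : act 1 f = f := by
  have h : (fun i => ∑ j, (1 : Matrix (Fin 4) (Fin 4) F2) i j • (X j : MvPolynomial (Fin 4) F2))
      = X := by
    funext i
    simp [Matrix.one_apply, ite_smul]
  simp [act, h]

lemma act_act (g h : Matrix (Fin 4) (Fin 4) F2) (f : MvPolynomial (Fin 4) F2) :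
    act g (act h f) = act (h * g) f := by
  show (aeval _) ((aeval _) f) = _
  rw [← AlgHom.comp_apply, comp_aeval]
  have key : (fun i => (aeval fun i => ∑ j, g i j • (X j : MvPolynomial (Fin 4) F2))
        (∑ j, h i j • (X j : MvPolynomial (Fin 4) F2)))
      = fun i => ∑ j, (h * g) i j • (X j : MvPolynomial (Fin 4) F2) := by
    funext i
    simp only [map_sum, map_smul, aeval_X, Matrix.mul_apply, Finset.smul_sum, smul_smul,
      Finset.sum_smul]
    rw [Finset.sum_comm]
  rw [key]
  rfl

/-- The stabilizer of a polynomial `f` under the linear-substitution action of `GL₄(𝔽₂)`. -/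
def stab (f : MvPolynomial (Fin 4) F2) : Subgroup (GL (Fin 4) F2) where
  carrier := {g | act (g : Matrix (Fin 4) (Fin 4) F2) f = f}
  one_mem' := by simpa using act_one f
  mul_mem' := by
    intro a b ha hb
    simp only [Set.mem_setOf_eq] at *
    have : act ((↑(a * b) : Matrix (Fin 4) (Fin 4) F2)) f = act ↑b (act ↑a f) := by
      rw [act_act]; rfl
    rw [this, ha, hb]
  inv_mem' := by
    intro a ha
    simp only [Set.mem_setOf_eq] at *
    have h2 := congrArg (act ((↑(a⁻¹) : Matrix (Fin 4) (Fin 4) F2))) ha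
    rw [act_act] at h2
    rw [Units.mul_inv, act_one] at h2
    exact h2.symm

/-- A smooth cubic form over `𝔽₂`: homogeneous of degree `3`, such that over an algebraic
closure the only common zero of `f` and its four partial derivatives is the origin. -/
def IsSmoothCubic (f : MvPolynomial (Fin 4) F2) : Prop :=
  f.IsHomogeneous 3 ∧
    ∀ v : Fin 4 → Kbar,
      eval v (map (algebraMap F2 Kbar) f) = 0 →
      (∀ i : Fin 4, eval v (map (algebraMap F2 Kbar) (pderiv i f)) = 0) →
      v = 0

/-- The cubic form `x²t + y²z + yz² + xt²`. -/
def c0 : MvPolynomial (Fin 4) F2 :=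
  X 0 ^ 2 * X 3 + X 1 ^ 2 * X 2 + X 1 * X 2 ^ 2 + X 0 * X 3 ^ 2

/-!
The order of `GL₄(𝔽₂)` is `20160 = 45 * 448`, so a subgroup of order divisible by `45` has index
prime to the number `15` of nonzero vectors, and therefore permutes them transitively. A cubic form
`f` with such a stabilizer is constant off the origin, and by Chevalley–Warning (degree `3`, four
variables) that constant is `f 0 = 0`. Vanishing on all vectors kills the coefficients of the
squarefree monomials, which leaves `f = ∑ A i j X_i² X_j`. Its values are `A(v, v)`, so the bilinear
form of `A` is alternating; its partial derivatives are the `A(v, e_k)`, so a vector in the radical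
is a singular point and smoothness makes `A` nondegenerate. Since squaring is additive and fixes
`𝔽₂`, substituting `g` replaces `A` by `gᵀ A g`, and nondegenerate alternating forms of the same
dimension are congruent.
-/

section Orbits

open MulAction

variable {Γ α : Type*} [Group Γ] [MulAction Γ α]

lemma orbit_subgroup_eq_of_coprime_index (H : Subgroup Γ) (a : α) (hfin : (orbit Γ a).Finite)
    (hcop : (orbit Γ a).ncard.Coprime H.index) : orbit H a = orbit Γ a := by
  have hsub : orbit H a ⊆ orbit Γ a := orbit_subgroup_subset H a
  have hindex : (stabilizer Γ a).relIndex H = (orbit H a).ncard := index_stabilizer H a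
  have htower : (orbit H a).ncard * H.index =
      H.relIndex (stabilizer Γ a) * (orbit Γ a).ncard := by
    rw [← hindex, ← index_stabilizer Γ a, ← Subgroup.inf_relIndex_right,
      Subgroup.relIndex_mul_index inf_le_right, ← Subgroup.inf_relIndex_left,
      Subgroup.relIndex_mul_index inf_le_left]
  have hdvd : (orbit Γ a).ncard ∣ (orbit H a).ncard :=
    hcop.dvd_of_dvd_mul_right (htower ▸ dvd_mul_left _ _)
  have hpos : 0 < (orbit H a).ncard := (Set.ncard_pos (hfin.subset hsub)).2 (nonempty_orbit a)
  exact Set.eq_of_subset_of_ncard_le hsub (Nat.le_of_dvd hpos hdvd) hfin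

lemma exists_linearEquiv_apply_eq {K V : Type*} [DivisionRing K] [AddCommGroup V] [Module K V]
    {v w : V} (hv : v ≠ 0) (hw : w ≠ 0) : ∃ e : V ≃ₗ[K] V, e v = w := by
  obtain ⟨e, he⟩ := Submodule.exists_linearEquiv_restrict_eq
    ((LinearEquiv.toSpanNonzeroSingleton K V v hv).symm ≪≫ₗ
      LinearEquiv.toSpanNonzeroSingleton K V w hw)
  have hev := he (LinearEquiv.toSpanNonzeroSingleton K V v hv 1)
  rw [LinearEquiv.trans_apply, LinearEquiv.symm_apply_apply] at hev
  exact ⟨e, by simpa only [LinearEquiv.toSpanNonzeroSingleton_apply, one_smul] using hev.symm⟩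

lemma orbit_GL_eq_setOf_ne_zero {n K : Type*} [Fintype n] [DecidableEq n] [Field K] {v : n → K}
    (hv : v ≠ 0) : orbit (GL n K) v = {w | w ≠ 0} := by
  ext w
  refine ⟨?_, fun hw ↦ ?_⟩
  · rintro ⟨g, rfl⟩
    exact (smul_ne_zero_iff_ne g).2 hv
  · obtain ⟨e, he⟩ := exists_linearEquiv_apply_eq (K := K) hv hw
    refine ⟨Matrix.GeneralLinearGroup.toLin.symm (.ofLinearEquiv e), ?_⟩
    change Matrix.toLin' (LinearMap.toMatrix' (e : (n → K) →ₗ[K] n → K)) v = w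
    rwa [Matrix.toLin'_toMatrix']

end Orbits

section FiniteField

variable {K σ : Type*} [Field K] [Fintype K] [Fintype σ]

lemma eval_zero_eq_of_forall_eval_eq {f : MvPolynomial σ K} {c : K}
    (hdeg : f.totalDegree < (Fintype.card K - 1) * Fintype.card σ)
    (hc : ∀ v ≠ 0, eval v f = c) : eval 0 f = c := by
  classical
  have hsum := sum_eval_eq_zero (f - C c) ((totalDegree_sub_C_le f c).trans_lt hdeg)
  rw [Finset.sum_eq_single 0 (fun v _ hv ↦ by simp [hc v hv]) (by simp)] at hsum
  simpa [sub_eq_zero] using hsum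

end FiniteField

section SquarefreeCoefficients

variable {σ R : Type*} [CommSemiring R] {f : MvPolynomial σ R}

lemma eval_indicator_one [DecidableEq σ] (f : MvPolynomial σ R) (S : Finset σ) :
    eval ((S : Set σ).indicator 1) f = ∑ d ∈ f.support with d.support ⊆ S, coeff d f := by
  rw [eval_eq, Finset.sum_filter]
  refine Finset.sum_congr rfl fun d _ ↦ ?_
  split_ifs with hd
  · rw [Finset.prod_eq_one fun i hi ↦ ?_, mul_one]
    simp [Set.indicator_of_mem (Finset.mem_coe.2 (hd hi))]
  · obtain ⟨i, hi, hiS⟩ := Finset.not_subset.1 hd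
    rw [Finset.prod_eq_zero hi, mul_zero]
    simp [hiS, Finsupp.mem_support_iff.1 hi]

lemma sum_coeff_eq_zero_of_eval_indicator_one_eq_zero [DecidableEq σ]
    (hf : ∀ S : Finset σ, eval ((S : Set σ).indicator 1) f = 0) (S : Finset σ) :
    ∑ d ∈ f.support with d.support = S, coeff d f = 0 := by
  induction S using Finset.strongInduction with
  | H S ih =>
    have h := hf S
    rw [eval_indicator_one, ← Finset.sum_fiberwise_of_maps_to (g := Finsupp.support)
      (t := S.powerset) (by simp),
      Finset.sum_eq_single_of_mem S (Finset.mem_powerset_self S)] at h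
    · rw [← h, Finset.filter_filter]
      congr! 2
      grind
    · intro T hT hTS
      rw [← ih T ((Finset.mem_powerset.1 hT).ssubset_of_ne hTS), Finset.filter_filter]
      congr! 2
      grind

-- On `0/1` vectors a monomial depends only on its support, and a homogeneous polynomial has at most
-- one monomial of each support as soon as one of them is squarefree.
lemma coeff_eq_zero_of_eval_indicator_one_eq_zero {n : ℕ} (hhom : f.IsHomogeneous n)
    (hf : ∀ S : Finset σ, eval ((S : Set σ).indicator 1) f = 0) {d : σ →₀ ℕ}
    (hd : ∀ i, d i ≤ 1) : coeff d f = 0 := by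
  classical
  by_contra hcoeff
  have hsingle : {e ∈ f.support | e.support = d.support} = {d} := by
    refine Finset.eq_singleton_iff_unique_mem.2 ⟨by simpa using hcoeff, fun e he ↦ ?_⟩
    obtain ⟨hef, hsupp⟩ := Finset.mem_filter.1 he
    have hdeg : e.degree = d.degree := by
      simp only [Finsupp.degree_eq_weight_one]
      exact (hhom (mem_support_iff.1 hef)).trans (hhom hcoeff).symm
    have hle : ∀ i ∈ d.support, d i ≤ e i := fun i hi ↦
      (hd i).trans (Nat.one_le_iff_ne_zero.2 (Finsupp.mem_support_iff.1 (hsupp ▸ hi)))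
    rw [Finsupp.degree_apply, Finsupp.degree_apply, hsupp, eq_comm,
      Finset.sum_eq_sum_iff_of_le hle] at hdeg
    ext i
    by_cases hi : i ∈ d.support
    · exact (hdeg i hi).symm
    · rw [Finsupp.notMem_support_iff.1 hi, Finsupp.notMem_support_iff.1 (hsupp ▸ hi)]
  apply hcoeff
  simpa [hsingle] using sum_coeff_eq_zero_of_eval_indicator_one_eq_zero hf d.support

end SquarefreeCoefficients

section FrobeniusForm

lemma exists_eq_single_add_single_of_degree_eq {σ : Type*} {p : ℕ} {d : σ →₀ ℕ}
    (hd : d.degree = p + 1) {i : σ} (hi : p ≤ d i) :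
    ∃ j, d = Finsupp.single i p + Finsupp.single j 1 := by
  obtain ⟨e, rfl⟩ := exists_add_of_le (Finsupp.single_le_iff.2 hi)
  have he : e.degree = 1 := by simpa [add_comm] using hd
  have : e ∈ Set.range fun j ↦ Finsupp.single j 1 := by
    rw [Finsupp.range_single_one]
    exact he
  obtain ⟨j, rfl⟩ := this
  exact ⟨j, rfl⟩

variable {σ τ R : Type*} [Fintype σ] [Fintype τ] [CommSemiring R]

/-- The form `∑ A i j • X i ^ p * X j` attached to a matrix `A`, linear in one set of variables and
Frobenius-linear in the other. Over `ZMod p` it takes the values of the bilinear form of `A` on the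
diagonal, and linear substitutions act on it through matrix congruence. -/
def frobeniusForm (p : ℕ) (A : Matrix σ σ R) : MvPolynomial σ R :=
  ∑ i, ∑ j, A i j • (X i ^ p * X j)

lemma exists_eq_frobeniusForm {p : ℕ} {f : MvPolynomial σ R} (hhom : f.IsHomogeneous (p + 1))
    (hf : ∀ d ∈ f.support, ∃ i, p ≤ d i) : ∃ A : Matrix σ σ R, f = frobeniusForm p A := by
  have hspan : f ∈ Submodule.span R
      (Set.range fun ij : σ × σ ↦ (X ij.1 ^ p * X ij.2 : MvPolynomial σ R)) := by
    rw [f.as_sum]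
    refine Submodule.sum_mem _ fun d hd ↦ ?_
    have hdeg : d.degree = p + 1 := by
      rw [Finsupp.degree_eq_weight_one]
      exact hhom (mem_support_iff.1 hd)
    obtain ⟨i, hi⟩ := hf d hd
    obtain ⟨j, hj⟩ := exists_eq_single_add_single_of_degree_eq hdeg hi
    have : monomial d (coeff d f) = coeff d f • (X i ^ p * X j) := by
      simp [X, monomial_pow, monomial_mul, smul_monomial, ← hj]
    rw [this]
    exact Submodule.smul_mem _ _ (Submodule.subset_span ⟨(i, j), rfl⟩)
  obtain ⟨c, hc⟩ := (Submodule.mem_span_range_iff_exists_fun R).1 hspan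
  exact ⟨Matrix.of (Function.curry c), by rw [← hc, Fintype.sum_prod_type]; rfl⟩

lemma exists_eq_frobeniusForm_of_eval_indicator_one_eq_zero {f : MvPolynomial σ R}
    (hhom : f.IsHomogeneous 3) (hf : ∀ S : Finset σ, eval ((S : Set σ).indicator 1) f = 0) :
    ∃ A : Matrix σ σ R, f = frobeniusForm 2 A := by
  refine exists_eq_frobeniusForm hhom fun d hd ↦ ?_
  by_contra! hlt
  exact mem_support_iff.1 hd
    (coeff_eq_zero_of_eval_indicator_one_eq_zero hhom hf fun i ↦ Nat.le_of_lt_succ (hlt i))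

lemma pderiv_frobeniusForm (p : ℕ) [CharP R p] (A : Matrix σ σ R) (k : σ) :
    pderiv k (frobeniusForm p A) = ∑ i, A i k • X i ^ p := by
  classical
  simp [frobeniusForm, Derivation.leibniz_pow, pderiv_X, Pi.single_apply]

section ZMod

variable {p : ℕ} [Fact p.Prime]

lemma eval_frobeniusForm [DecidableEq σ] (A : Matrix σ σ (ZMod p)) (v : σ → ZMod p) :
    eval v (frobeniusForm p A) = Matrix.toBilin' A v v := by
  simp [frobeniusForm, Matrix.toBilin'_apply, mul_assoc, mul_left_comm]

lemma eval_pderiv_frobeniusForm [DecidableEq σ] (A : Matrix σ σ (ZMod p)) (v : σ → ZMod p)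
    (k : σ) : eval v (pderiv k (frobeniusForm p A)) = Matrix.toBilin' A v (Pi.single k 1) := by
  simp [pderiv_frobeniusForm, Matrix.toBilin'_apply, Pi.single_apply, mul_comm]

lemma aeval_sum_smul_X_frobeniusForm (A : Matrix σ σ (ZMod p)) (g : Matrix σ τ (ZMod p)) :
    aeval (fun i ↦ ∑ j, g i j • (X j : MvPolynomial τ (ZMod p))) (frobeniusForm p A) =
      frobeniusForm p (g.transpose * A * g) := by
  have hfrob (i : σ) : (∑ j, g i j • (X j : MvPolynomial τ (ZMod p))) ^ p =
      ∑ j, g i j • X j ^ p := by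
    simp only [sum_pow_char, smul_pow, ZMod.pow_card]
  simp only [frobeniusForm, map_sum, map_smul, map_mul, map_pow, aeval_X, hfrob,
    Finset.sum_mul_sum, Finset.smul_sum, smul_mul_smul_comm, smul_smul]
  simp only [Matrix.mul_apply, Matrix.transpose_apply, Finset.sum_mul, Finset.sum_smul]
  simp_rw [Finset.sum_comm (s := Finset.univ (α := σ)) (t := Finset.univ (α := τ))]
  refine Finset.sum_congr rfl fun k _ ↦ Finset.sum_congr rfl fun l _ ↦ ?_
  rw [Finset.sum_comm]
  simp only [mul_assoc, mul_left_comm]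

lemma separatingLeft_toBilin'_of_frobeniusForm [DecidableEq σ] {A : Matrix σ σ (ZMod p)}
    (hsing : ∀ v, eval v (frobeniusForm p A) = 0 →
      (∀ i, eval v (pderiv i (frobeniusForm p A)) = 0) → v = 0) :
    (Matrix.toBilin' A).SeparatingLeft := fun v hv ↦
  hsing v (by rw [eval_frobeniusForm, hv]) fun i ↦ by rw [eval_pderiv_frobeniusForm, hv]

end ZMod

end FrobeniusForm

section AlternatingIsometry

open LinearMap (BilinForm)

section CommRing

variable {R V W : Type*} [CommRing R] [AddCommGroup V] [Module R V] [AddCommGroup W] [Module R W]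
  {B : BilinForm R V} {B' : BilinForm R W}

lemma linearIndependent_pair_of_isAlt (hB : B.IsAlt) {x y : V} (hxy : B x y = 1) :
    LinearIndependent R ![x, y] := by
  refine LinearIndependent.pair_iff.2 fun s t h ↦ ⟨?_, ?_⟩
  · simpa [hxy, hB.self_eq_zero] using congrArg (B · y) h
  · simpa [hxy, hB.self_eq_zero] using congrArg (B x) h

lemma mem_orthogonal_span_pair {x y v : V} :
    v ∈ B.orthogonal (Submodule.span R {x, y}) ↔ B x v = 0 ∧ B y v = 0 := by
  refine ⟨fun h ↦ ⟨h x (Submodule.subset_span (by simp)), h y (Submodule.subset_span (by simp))⟩,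
    fun ⟨hx, hy⟩ u hu ↦ ?_⟩
  obtain ⟨a, b, rfl⟩ := Submodule.mem_span_pair.1 hu
  simp [hx, hy]

/-- The projection `v ↦ v + B y v • x - B x v • y` onto the orthogonal complement of the hyperbolic
plane spanned by a pair with `B x y = 1`, along that plane. -/
def orthogonalPairProj (hB : B.IsAlt) {x y : V} (hxy : B x y = 1) :
    V →ₗ[R] B.orthogonal (Submodule.span R {x, y}) :=
  LinearMap.codRestrict _ (LinearMap.id + (B y).smulRight x - (B x).smulRight y) fun v ↦
    mem_orthogonal_span_pair.2 (by
      have hyx : B y x = -1 := by rw [← hB.neg_eq, hxy]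
      simp [hxy, hyx, hB.self_eq_zero])

lemma coe_orthogonalPairProj (hB : B.IsAlt) {x y : V} (hxy : B x y = 1) (v : V) :
    (orthogonalPairProj hB hxy v : V) = v + B y v • x - B x v • y := rfl

lemma disjoint_span_pair_orthogonal (hB : B.IsAlt) {x y : V} (hxy : B x y = 1) :
    Disjoint (Submodule.span R {x, y}) (B.orthogonal (Submodule.span R {x, y})) := by
  refine Submodule.disjoint_def.2 fun u hu hu' ↦ ?_
  obtain ⟨a, b, rfl⟩ := Submodule.mem_span_pair.1 hu
  have hyx : B y x = -1 := by rw [← hB.neg_eq, hxy]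
  obtain ⟨hb, ha⟩ := mem_orthogonal_span_pair.1 hu'
  simp only [map_add, map_smul, hB.self_eq_zero, hxy, hyx, smul_eq_mul, mul_zero, zero_add,
    add_zero, mul_one, mul_neg, neg_eq_zero] at ha hb
  simp [ha, hb]

lemma apply_orthogonalPairProj (hB : B.IsAlt) {x y : V} (hxy : B x y = 1) (u v : V) :
    B (orthogonalPairProj hB hxy u) (orthogonalPairProj hB hxy v) =
      B u v - B x u * B y v + B y u * B x v := by
  have hyx : B y x = -1 := by rw [← hB.neg_eq, hxy]
  simp only [coe_orthogonalPairProj, map_add, map_sub, map_smul, LinearMap.add_apply,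
    LinearMap.sub_apply, LinearMap.smul_apply, hxy, hyx, hB.self_eq_zero, smul_eq_mul,
    ← hB.neg_eq x u, ← hB.neg_eq y u]
  ring

lemma exists_isometry_of_isometry_orthogonal (hB : B.IsAlt) (hB' : B'.IsAlt) {x y : V} {x' y' : W}
    (hxy : B x y = 1) (hxy' : B' x' y' = 1)
    (e : B.orthogonal (Submodule.span R {x, y}) →ₗ[R] B'.orthogonal (Submodule.span R {x', y'}))
    (he : ∀ u v, B' (e u) (e v) = B u v) :
    ∃ e : V →ₗ[R] W, ∀ u v, B' (e u) (e v) = B u v := by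
  have hyx' : B' y' x' = -1 := by rw [← hB'.neg_eq, hxy']
  have hleft (u) : B' x' (e u) = 0 ∧ B' y' (e u) = 0 := mem_orthogonal_span_pair.1 (e u).2
  have hright (u) : B' (e u) x' = 0 ∧ B' (e u) y' = 0 := by
    rw [← hB'.neg_eq x', ← hB'.neg_eq y', (hleft u).1, (hleft u).2, neg_zero]
    exact ⟨rfl, rfl⟩
  refine ⟨(B x).smulRight y' - (B y).smulRight x' +
    Submodule.subtype _ ∘ₗ e ∘ₗ orthogonalPairProj hB hxy, fun u v ↦ ?_⟩
  simp only [LinearMap.add_apply, LinearMap.sub_apply, LinearMap.smulRight_apply,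
    LinearMap.comp_apply, Submodule.subtype_apply, map_add, map_sub, map_smul,
    LinearMap.smul_apply, hxy', hyx', hB'.self_eq_zero, hleft, hright, he,
    apply_orthogonalPairProj, smul_eq_mul]
  ring

end CommRing

section Field

variable {K V W : Type*} [Field K] [AddCommGroup V] [Module K V] [AddCommGroup W] [Module K W]
  {B : BilinForm K V} {B' : BilinForm K W}

lemma exists_apply_eq_one_of_nondegenerate [Nontrivial V] (hB : B.Nondegenerate) :
    ∃ x y, B x y = 1 := by
  obtain ⟨x, hx⟩ := exists_ne (0 : V)
  obtain ⟨y, hy⟩ : ∃ y, B x y ≠ 0 := by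
    by_contra! h
    exact hx (hB.1 x h)
  exact ⟨x, (B x y)⁻¹ • y, by simp [hy]⟩

lemma nondegenerate_restrict_orthogonal_span_pair [FiniteDimensional K V] (hB : B.IsAlt)
    (hnd : B.Nondegenerate) {x y : V} (hxy : B x y = 1) :
    (B.restrict (B.orthogonal (Submodule.span K {x, y}))).Nondegenerate := by
  refine BilinForm.nondegenerate_restrict_of_disjoint_orthogonal B hB.isRefl ?_
  rw [BilinForm.orthogonal_orthogonal hnd hB.isRefl]
  exact (disjoint_span_pair_orthogonal hB hxy).symm

lemma finrank_orthogonal_span_pair [FiniteDimensional K V] (hB : B.IsAlt)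
    (hnd : B.Nondegenerate) {x y : V} (hxy : B x y = 1) :
    Module.finrank K (B.orthogonal (Submodule.span K {x, y})) + 2 = Module.finrank K V := by
  have hspan := finrank_span_eq_card (linearIndependent_pair_of_isAlt hB hxy)
  rw [Matrix.range_cons_cons_empty, Fintype.card_fin] at hspan
  have hle := Submodule.finrank_le (Submodule.span K {x, y})
  rw [BilinForm.finrank_orthogonal hnd]
  omega

theorem exists_isometry_of_isAlt [FiniteDimensional K V] [FiniteDimensional K W] (hB : B.IsAlt)
    (hB' : B'.IsAlt) (hnd : B.Nondegenerate) (hnd' : B'.Nondegenerate)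
    (hrank : Module.finrank K V ≤ Module.finrank K W) :
    ∃ e : V →ₗ[K] W, ∀ u v, B' (e u) (e v) = B u v := by
  induction hn : Module.finrank K V using Nat.strong_induction_on generalizing V W with
  | h n ih =>
    subst hn
    rcases subsingleton_or_nontrivial V with hV | hV
    · exact ⟨0, fun u v ↦ by simp [Subsingleton.elim u 0]⟩
    have hpos : 0 < Module.finrank K V := Module.finrank_pos
    have : Nontrivial W := Module.nontrivial_of_finrank_pos (hpos.trans_le hrank)
    obtain ⟨x, y, hxy⟩ := exists_apply_eq_one_of_nondegenerate hnd
    obtain ⟨x', y', hxy'⟩ := exists_apply_eq_one_of_nondegenerate hnd'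
    have hdim := finrank_orthogonal_span_pair hB hnd hxy
    have hdim' := finrank_orthogonal_span_pair hB' hnd' hxy'
    obtain ⟨e, he⟩ := ih _ (by omega) (B := B.restrict _) (B' := B'.restrict _)
      (fun u ↦ hB u) (fun u ↦ hB' u)
      (nondegenerate_restrict_orthogonal_span_pair hB hnd hxy)
      (nondegenerate_restrict_orthogonal_span_pair hB' hnd' hxy') (by omega) rfl
    exact exists_isometry_of_isometry_orthogonal hB hB' hxy hxy' e he

end Field

end AlternatingIsometry

section MatrixCongruence

variable {n K : Type*} [Fintype n] [DecidableEq n] [Field K]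

theorem exists_transpose_mul_mul_eq {A A' : Matrix n n K} (hA : (Matrix.toBilin' A).IsAlt)
    (hA' : (Matrix.toBilin' A').IsAlt) (hnd : (Matrix.toBilin' A).Nondegenerate)
    (hnd' : (Matrix.toBilin' A').Nondegenerate) :
    ∃ g : GL n K, (g : Matrix n n K).transpose * A * (g : Matrix n n K) = A' := by
  obtain ⟨e, he⟩ := exists_isometry_of_isAlt hA' hA hnd' hnd le_rfl
  have hcomp : (Matrix.toBilin' A).comp e e = Matrix.toBilin' A' := LinearMap.ext₂ he
  have hmul : (LinearMap.toMatrix' e).transpose * A * LinearMap.toMatrix' e = A' := by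
    rw [← LinearMap.BilinForm.toMatrix'_toBilin' A', ← hcomp,
      LinearMap.BilinForm.toMatrix'_comp, LinearMap.BilinForm.toMatrix'_toBilin']
  have hdet : (LinearMap.toMatrix' e).det ≠ 0 := fun h ↦
    LinearMap.BilinForm.nondegenerate_toBilin'_iff_det_ne_zero.1 hnd' (by rw [← hmul]; simp [h])
  exact ⟨Matrix.GeneralLinearGroup.mkOfDetNeZero _ hdet, hmul⟩

end MatrixCongruence

section Stabilizer

open MulAction

variable {f : MvPolynomial (Fin 4) F2}

lemma eval_act (g : Matrix (Fin 4) (Fin 4) F2) (f : MvPolynomial (Fin 4) F2) (v : Fin 4 → F2) :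
    eval v (act g f) = eval (g.mulVec v) f := by
  rw [act, ← coe_aeval_eq_eval, ← coe_aeval_eq_eval, RingHom.coe_coe, RingHom.coe_coe,
    ← AlgHom.comp_apply, comp_aeval]
  congr! 2
  ext i
  simp [Matrix.mulVec, dotProduct]

lemma act_frobeniusForm (g A : Matrix (Fin 4) (Fin 4) F2) :
    act g (frobeniusForm 2 A) = frobeniusForm 2 (g.transpose * A * g) :=
  aeval_sum_smul_X_frobeniusForm A g

lemma card_GL_fin_four_F2 : Nat.card (GL (Fin 4) F2) = 20160 := by
  rw [Matrix.card_GL_field]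
  simp [Fin.prod_univ_four]

lemma orbit_stab_eq_setOf_ne_zero (h : 45 ∣ Nat.card (stab f)) {v : Fin 4 → F2} (hv : v ≠ 0) :
    orbit (stab f) v = {w | w ≠ 0} := by
  rw [← orbit_GL_eq_setOf_ne_zero hv]
  refine orbit_subgroup_eq_of_coprime_index _ v (Set.toFinite _) ?_
  have hindex : (stab f).index ∣ 448 := by
    have hcard : Nat.card (stab f) * (stab f).index = 45 * 448 := by
      rw [Subgroup.card_mul_index, card_GL_fin_four_F2]
    exact Nat.dvd_of_mul_dvd_mul_left (by norm_num) (hcard ▸ Nat.mul_dvd_mul_right h _)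
  have hncard : {w : Fin 4 → F2 | w ≠ 0}.ncard = 15 := by
    simpa [Set.compl_singleton_eq] using Set.ncard_compl ({0} : Set (Fin 4 → F2))
  rw [orbit_GL_eq_setOf_ne_zero hv, hncard]
  exact Nat.Coprime.coprime_dvd_right hindex (by norm_num)

theorem eval_eq_zero_of_dvd_card_stab (hhom : f.IsHomogeneous 3) (h : 45 ∣ Nat.card (stab f))
    (v : Fin 4 → F2) : eval v f = 0 := by
  have hconst : ∀ w ≠ 0, eval w f = eval 1 f := by
    intro w hw
    obtain ⟨g, rfl⟩ : w ∈ orbit (stab f) (1 : Fin 4 → F2) := by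
      rwa [orbit_stab_eq_setOf_ne_zero h one_ne_zero]
    have hg : act (g : GL (Fin 4) F2) f = f := g.2
    conv_rhs => rw [← hg]
    exact (eval_act _ f 1).symm
  have hzero : eval 0 f = eval 1 f :=
    eval_zero_eq_of_forall_eval_eq (hhom.totalDegree_le.trans_lt (by simp)) hconst
  have hzero' : eval 0 f = 0 := by
    rw [eval_zero]
    exact hhom.coeff_eq_zero (by simp)
  by_cases hv : v = 0
  · rw [hv, hzero']
  · rw [hconst v hv, ← hzero, hzero']

end Stabilizer

theorem exists_eq_frobeniusForm_of_dvd_card_stab {f : MvPolynomial (Fin 4) F2}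
    (hhom : f.IsHomogeneous 3)
    (hsing : ∀ v, eval v f = 0 → (∀ i, eval v (pderiv i f) = 0) → v = 0)
    (h : 45 ∣ Nat.card (stab f)) :
    ∃ A, f = frobeniusForm 2 A ∧ (Matrix.toBilin' A).IsAlt ∧ (Matrix.toBilin' A).Nondegenerate := by
  have heval := eval_eq_zero_of_dvd_card_stab hhom h
  obtain ⟨A, rfl⟩ := exists_eq_frobeniusForm_of_eval_indicator_one_eq_zero hhom fun _ ↦ heval _
  refine ⟨A, rfl, fun v ↦ ?_, .ofSeparatingLeft (separatingLeft_toBilin'_of_frobeniusForm hsing)⟩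
  rw [← eval_frobeniusForm, heval]

lemma IsSmoothCubic.eq_zero_of_eval_pderiv_eq_zero {f : MvPolynomial (Fin 4) F2}
    (hf : IsSmoothCubic f) {v : Fin 4 → F2} (hv : eval v f = 0)
    (hderiv : ∀ i, eval v (pderiv i f) = 0) : v = 0 := by
  have heval (q : MvPolynomial (Fin 4) F2) (hq : eval v q = 0) :
      eval (algebraMap F2 Kbar ∘ v) (map (algebraMap F2 Kbar) q) = 0 := by
    rw [← map_eval, hq, map_zero]
  have hzero := hf.2 _ (heval f hv) fun i ↦ heval _ (hderiv i)
  ext i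
  simpa using congrFun hzero i

theorem uniqueness_of_720_cubic_general {f f' : MvPolynomial (Fin 4) F2}
    (hf : f.IsHomogeneous 3) (hf' : f'.IsHomogeneous 3)
    (hsing : ∀ v, eval v f = 0 → (∀ i, eval v (pderiv i f) = 0) → v = 0)
    (hsing' : ∀ v, eval v f' = 0 → (∀ i, eval v (pderiv i f') = 0) → v = 0)
    (h : 45 ∣ Nat.card (stab f)) (h' : 45 ∣ Nat.card (stab f')) :
    ∃ g : GL (Fin 4) F2, act (g : Matrix (Fin 4) (Fin 4) F2) f = f' := by
  obtain ⟨A, rfl, hA, hnd⟩ := exists_eq_frobeniusForm_of_dvd_card_stab hf hsing h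
  obtain ⟨A', rfl, hA', hnd'⟩ := exists_eq_frobeniusForm_of_dvd_card_stab hf' hsing' h'
  obtain ⟨g, hg⟩ := exists_transpose_mul_mul_eq hA hA' hnd hnd'
  exact ⟨g, by rw [act_frobeniusForm, hg]⟩

/-- any two smooth cubic forms over `𝔽₂` whose stabilizers in `GL₄(𝔽₂)` have
order `720` are `GL₄(𝔽₂)`-equivalent: the smooth cubic surface over `𝔽₂` with automorphism
group of order `720` is unique up to isomorphism. -/
theorem uniqueness_of_720_cubic (f f' : MvPolynomial (Fin 4) F2)
    (hf : IsSmoothCubic f) (hf' : IsSmoothCubic f')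
    (h : Nat.card (stab f) = 720) (h' : Nat.card (stab f') = 720) :
    ∃ g : GL (Fin 4) F2, act (g : Matrix (Fin 4) (Fin 4) F2) f = f' := by
  exact uniqueness_of_720_cubic_general hf.1 hf'.1 (fun _ ↦ hf.eq_zero_of_eval_pderiv_eq_zero)
    (fun _ ↦ hf'.eq_zero_of_eval_pderiv_eq_zero) (by norm_num [h]) (by norm_num [h'])
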